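/- Let T be a satisfiable Horn NAT without fixed letters. Then (i) T has a least model, i.e., a unique minimal model M(T) which satisfies M(T) ≤_{At∖Ab;∅} M for every model M of T; and (ii) there exists a Horn CNF φ(T) that is logically equivalent to T, i.e., has exactly the same models as T. -/

import Mathlib

/-!
STATEMENT 9: a satisfiable Horn NAT without fixed letters has a least model and is
logically equivalent to a Horn CNF.
-/

namespace NestedCirc

universe u
variable {α : Type u}

/-- Propositional formulas over atoms `α`. -/
inductive PForm (α : Type u) : Type u where
  | tru : PForm α
  | fls : PForm α
  | atom : α → PForm α
  | neg : PForm α → PForm α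
  | conj : PForm α → PForm α → PForm α
  | disj : PForm α → PForm α → PForm α

namespace PForm

/-- Satisfaction of a propositional formula in an interpretation (set of true atoms). -/
def sat : PForm α → Set α → Prop
  | tru, _ => True
  | fls, _ => False
  | atom a, M => a ∈ M
  | neg φ, M => ¬ φ.sat M
  | conj φ ψ, M => φ.sat M ∧ ψ.sat M
  | disj φ ψ, M => φ.sat M ∨ ψ.sat M

/-- Implication `φ → ψ`. -/
def imp (φ ψ : PForm α) : PForm α := disj (neg φ) ψ

/-- Equivalence `φ ↔ ψ`. -/
def iffF (φ ψ : PForm α) : PForm α := conj (imp φ ψ) (imp ψ φ)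

/-- The atoms occurring in a formula. -/
def atoms : PForm α → Set α
  | tru => ∅
  | fls => ∅
  | atom a => {a}
  | neg φ => φ.atoms
  | conj φ ψ => φ.atoms ∪ ψ.atoms
  | disj φ ψ => φ.atoms ∪ ψ.atoms

/-- Conjunction of a list of formulas. -/
def conjList (l : List (PForm α)) : PForm α := l.foldr conj tru

end PForm

/-- `M ≤_{P;Z} M'` : `M` agrees with `M'` on the fixed atoms `(P ∪ Z)ᶜ`
and is smaller or equal on the minimized atoms `P`. -/
def lePZ (P Z M M' : Set α) : Prop :=
  M ∩ P ⊆ M' ∩ P ∧ M ∩ (P ∪ Z)ᶜ = M' ∩ (P ∪ Z)ᶜ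

/-- `M <_{P;Z} M'` (strict preference). -/
def ltPZ (P Z M M' : Set α) : Prop := lePZ P Z M M' ∧ ¬ lePZ P Z M' M

/-- A block `{C : B₁,…,Bₘ}` of a nested abnormality theory: the described atoms `C`,
the members that are propositional formulas, and the members that are blocks. -/
inductive Block (α : Type u) : Type u where
  | mk : Set α → List (PForm α) → List (Block α) → Block α

/-- Satisfaction of a block: `M ⊨ {C : B₁,…,Bₘ}` iff some interpretation `M*` agreeing
with `M` outside `Ab` satisfies every member and is `(Ab;C)`-minimal doing so. -/
def Block.sat (Ab : Set α) : Block α → Set α → Prop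
  | .mk C fs bs, M =>
      ∃ Ms : Set α, Ms ∩ Abᶜ = M ∩ Abᶜ ∧
        ((∀ f ∈ fs, f.sat Ms) ∧ ∀ b ∈ bs, Block.sat Ab b Ms) ∧
        ∀ N : Set α, ((∀ f ∈ fs, f.sat N) ∧ ∀ b ∈ bs, Block.sat Ab b N) → ¬ ltPZ Ab C N Ms

/-- A nested abnormality theory (NAT): a finite collection of blocks. -/
abbrev NAT (α : Type u) := List (Block α)

/-- `M ⊨ T` iff `M` satisfies every block of `T`. -/
def NAT.sat (Ab : Set α) (T : NAT α) (M : Set α) : Prop := ∀ B ∈ T, Block.sat Ab B M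

/-- `φ` is a clause: a disjunction of literals (with `fls` for the empty clause). -/
def PForm.IsClause : PForm α → Prop
  | .fls => True
  | .atom _ => True
  | .neg (.atom _) => True
  | .disj φ ψ => φ.IsClause ∧ ψ.IsClause
  | _ => False

/-- The number of positive literals of a clause. -/
def PForm.posCount : PForm α → ℕ
  | .atom _ => 1
  | .disj φ ψ => φ.posCount + ψ.posCount
  | _ => 0

/-- A Horn clause: a clause with at most one positive literal. -/
def PForm.IsHornClause (φ : PForm α) : Prop := φ.IsClause ∧ φ.posCount ≤ 1

/-- A Horn CNF: a conjunction of Horn clauses. -/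
def PForm.IsHornCNF : PForm α → Prop
  | .tru => True
  | .conj φ ψ => φ.IsHornCNF ∧ ψ.IsHornCNF
  | φ => φ.IsHornClause

/-- A Horn block: every propositional member is a Horn CNF and every block member is
recursively Horn. -/
inductive Block.IsHorn : Block α → Prop where
  | mk {C : Set α} {fs : List (PForm α)} {bs : List (Block α)} :
      (∀ f ∈ fs, f.IsHornCNF) → (∀ b ∈ bs, b.IsHorn) → Block.IsHorn (.mk C fs bs)

/-- A block (recursively) without fixed letters: the described atoms of every block
occurring in it are all of `At ∖ Ab`. -/
inductive Block.NoFixed (Ab : Set α) : Block α → Prop where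
  | mk {C : Set α} {fs : List (PForm α)} {bs : List (Block α)} :
      C = Abᶜ → (∀ b ∈ bs, b.NoFixed Ab) → Block.NoFixed Ab (.mk C fs bs)

/-!
Horn-definable families of interpretations are closed under nonempty intersections, so a satisfiable
Horn CNF has a least model `K`. When a block describes all of `At ∖ Ab`, minimality compares only
the `Ab`-parts of the models of its members, so the minimal ones are those whose `Ab`-part is that
of `K`. The block is therefore equivalent to its members with every abnormality atom replaced by its
truth value in `K`, and this substitution turns Horn clauses into Horn clauses or `⊤`. By induction
on nesting every block, and hence the theory, is equivalent to a Horn CNF.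
-/

section SInfClosed

variable {β : Type*} [CompleteSemilatticeInf β] {s t : Set β}

/-- Closure of a set under infima of its nonempty subsets. For `β = Set α` this is closure under
nonempty intersections, the semantic property of Horn theories that yields least models. -/
def SInfClosed (s : Set β) : Prop := ∀ ⦃r : Set β⦄, r ⊆ s → r.Nonempty → sInf r ∈ s

theorem SInfClosed.isLeast_sInf (hs : SInfClosed s) (hne : s.Nonempty) : IsLeast s (sInf s) :=
  ⟨hs subset_rfl hne, fun _ hx => sInf_le hx⟩

theorem SInfClosed.univ : SInfClosed (Set.univ : Set β) := fun _ _ _ => trivial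

theorem SInfClosed.inter (hs : SInfClosed s) (ht : SInfClosed t) : SInfClosed (s ∩ t) :=
  fun _ hr hne =>
    ⟨hs (hr.trans Set.inter_subset_left) hne, ht (hr.trans Set.inter_subset_right) hne⟩

theorem SInfClosed.of_isLowerSet (hs : IsLowerSet s) : SInfClosed s :=
  fun _ hr ⟨_, hx⟩ => hs (sInf_le hx) (hr hx)

theorem SInfClosed.union_of_isLowerSet (hs : IsLowerSet s) (ht : SInfClosed t) :
    SInfClosed (s ∪ t) := by
  intro r hr hne
  by_cases hmeets : ∃ x ∈ r, x ∈ s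
  · obtain ⟨x, hxr, hxs⟩ := hmeets
    exact Or.inl (hs (sInf_le hxr) hxs)
  · exact Or.inr (ht (fun x hx => (hr hx).resolve_left fun hxs => hmeets ⟨x, hx, hxs⟩) hne)

end SInfClosed

namespace PForm

/-- The set of models of a propositional formula. -/
def models (φ : PForm α) : Set (Set α) := {M | φ.sat M}

variable {φ : PForm α}

theorem IsHornClause.isHornCNF (hφ : φ.IsHornClause) : φ.IsHornCNF := by
  cases φ with
  | tru => trivial
  | conj _ _ => exact hφ.1.elim
  | _ => exact hφ

@[elab_as_elim]
theorem IsClause.induction {motive : ∀ φ : PForm α, φ.IsClause → Prop}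
    (fls : motive fls trivial) (atom : ∀ a, motive (atom a) trivial)
    (neg_atom : ∀ a, motive (neg (.atom a)) trivial)
    (disj : ∀ φ ψ hφ hψ, motive φ hφ → motive ψ hψ → motive (disj φ ψ) ⟨hφ, hψ⟩)
    (hφ : φ.IsClause) : motive φ hφ := by
  induction φ with
  | tru => exact hφ.elim
  | fls => exact fls
  | atom a => exact atom a
  | neg φ _ =>
    cases φ with
    | atom a => exact neg_atom a
    | _ => exact hφ.elim
  | conj _ _ _ _ => exact hφ.elim
  | disj φ ψ ihφ ihψ => exact disj φ ψ hφ.1 hφ.2 (ihφ hφ.1) (ihψ hφ.2)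

@[elab_as_elim]
theorem IsHornCNF.induction {motive : ∀ φ : PForm α, φ.IsHornCNF → Prop}
    (tru : motive tru trivial)
    (conj : ∀ φ ψ hφ hψ, motive φ hφ → motive ψ hψ → motive (conj φ ψ) ⟨hφ, hψ⟩)
    (clause : ∀ φ (hφ : φ.IsHornClause), motive φ hφ.isHornCNF)
    (hφ : φ.IsHornCNF) : motive φ hφ := by
  induction φ with
  | tru => exact tru
  | conj φ ψ ihφ ihψ => exact conj φ ψ hφ.1 hφ.2 (ihφ hφ.1) (ihψ hφ.2)
  | _ => exact clause _ hφ

theorem IsClause.isLowerSet_models (hφ : φ.IsClause) (hpos : φ.posCount = 0) :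
    IsLowerSet φ.models := by
  induction hφ using IsClause.induction with
  | fls => exact isLowerSet_empty
  | atom a => exact absurd hpos one_ne_zero
  | neg_atom a => exact fun _ _ hle ha ha' => ha (hle ha')
  | disj φ ψ _ _ ihφ ihψ =>
    obtain ⟨hφ₀, hψ₀⟩ := Nat.add_eq_zero_iff.mp hpos
    exact (ihφ hφ₀).union (ihψ hψ₀)

theorem IsHornClause.sInfClosed_models (hφ : φ.IsHornClause) : SInfClosed φ.models := by
  obtain ⟨hclause, hpos⟩ := hφ
  induction hclause using IsClause.induction with
  | fls => exact .of_isLowerSet isLowerSet_empty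
  | atom a => exact fun _ hr _ => hr
  | neg_atom a => exact .of_isLowerSet (IsClause.isLowerSet_models (φ := neg (atom a)) trivial rfl)
  | disj φ ψ hφ hψ ihφ ihψ =>
    change φ.posCount + ψ.posCount ≤ 1 at hpos
    change SInfClosed (φ.models ∪ ψ.models)
    rcases Nat.eq_zero_or_pos φ.posCount with hφ₀ | hφ₁
    · exact .union_of_isLowerSet (hφ.isLowerSet_models hφ₀) (ihψ (by lia))
    · rw [Set.union_comm]
      exact .union_of_isLowerSet (hψ.isLowerSet_models (by lia)) (ihφ (by lia))

theorem IsHornCNF.sInfClosed_models (hφ : φ.IsHornCNF) : SInfClosed φ.models := by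
  induction hφ using IsHornCNF.induction with
  | tru => exact .univ
  | conj φ ψ _ _ ihφ ihψ => exact ihφ.inter ihψ
  | clause φ hφ => exact hφ.sInfClosed_models

end PForm

/-- `ClauseDefinable k 𝓜`: the family `𝓜` of interpretations is the set of models of `⊤` or of a
clause with at most `k` positive literals. The formula `⊤` is listed separately because it is not a
clause in the sense of `PForm.IsClause`. -/
def ClauseDefinable (k : ℕ) (𝓜 : Set (Set α)) : Prop :=
  𝓜 = Set.univ ∨ ∃ φ : PForm α, φ.IsClause ∧ φ.posCount ≤ k ∧ φ.models = 𝓜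

theorem ClauseDefinable.union {k l : ℕ} {𝓜 𝓝 : Set (Set α)} (h𝓜 : ClauseDefinable k 𝓜)
    (h𝓝 : ClauseDefinable l 𝓝) : ClauseDefinable (k + l) (𝓜 ∪ 𝓝) := by
  rcases h𝓜 with rfl | ⟨φ, hφ, hφk, rfl⟩
  · exact Or.inl (Set.univ_union _)
  rcases h𝓝 with rfl | ⟨ψ, hψ, hψl, rfl⟩
  · exact Or.inl (Set.union_univ _)
  exact Or.inr ⟨.disj φ ψ, ⟨hφ, hψ⟩, Nat.add_le_add hφk hψl, rfl⟩

theorem ClauseDefinable.empty (k : ℕ) : ClauseDefinable k (∅ : Set (Set α)) :=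
  Or.inr ⟨.fls, trivial, Nat.zero_le k, rfl⟩

section Substitution

variable {A K : Set α} {a : α}

theorem preimage_ite_models_atom_of_mem (ha : a ∈ A) :
    A.ite K ⁻¹' (PForm.atom a).models = {_M | a ∈ K} := by
  ext M
  simp [PForm.models, PForm.sat, Set.ite, ha]

theorem preimage_ite_models_atom_of_notMem (ha : a ∉ A) :
    A.ite K ⁻¹' (PForm.atom a).models = (PForm.atom a).models := by
  ext M
  simp [PForm.models, PForm.sat, Set.ite, ha]

theorem clauseDefinable_preimage_ite_atom (A K : Set α) (a : α) :
    ClauseDefinable 1 (A.ite K ⁻¹' (PForm.atom a).models) := by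
  by_cases haA : a ∈ A
  · rw [preimage_ite_models_atom_of_mem haA]
    by_cases haK : a ∈ K
    · exact Or.inl (by simp [haK])
    · simpa [haK] using ClauseDefinable.empty 1
  · rw [preimage_ite_models_atom_of_notMem haA]
    exact Or.inr ⟨.atom a, trivial, le_rfl, rfl⟩

theorem clauseDefinable_preimage_ite_neg_atom (A K : Set α) (a : α) :
    ClauseDefinable 0 (A.ite K ⁻¹' (PForm.neg (.atom a)).models) := by
  change ClauseDefinable 0 (A.ite K ⁻¹' (PForm.atom a).models)ᶜ
  by_cases haA : a ∈ A
  · rw [preimage_ite_models_atom_of_mem haA]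
    by_cases haK : a ∈ K
    · simpa [haK] using ClauseDefinable.empty 0
    · exact Or.inl (by simp [haK])
  · rw [preimage_ite_models_atom_of_notMem haA]
    exact Or.inr ⟨.neg (.atom a), trivial, le_rfl, rfl⟩

theorem PForm.IsClause.clauseDefinable_preimage_ite {φ : PForm α} (hφ : φ.IsClause)
    (A K : Set α) : ClauseDefinable φ.posCount (A.ite K ⁻¹' φ.models) := by
  induction hφ using PForm.IsClause.induction with
  | fls => exact .empty 0
  | atom a => exact clauseDefinable_preimage_ite_atom A K a
  | neg_atom a => exact clauseDefinable_preimage_ite_neg_atom A K a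
  | disj φ ψ _ _ ihφ ihψ => exact ihφ.union ihψ

end Substitution

/-- The family `𝓜` of interpretations is the set of models of some Horn CNF. -/
def HornDefinable (𝓜 : Set (Set α)) : Prop := ∃ φ : PForm α, φ.IsHornCNF ∧ φ.models = 𝓜

theorem ClauseDefinable.hornDefinable {𝓜 : Set (Set α)} {k : ℕ} (hk : k ≤ 1)
    (h𝓜 : ClauseDefinable k 𝓜) : HornDefinable 𝓜 := by
  rcases h𝓜 with rfl | ⟨φ, hφ, hφk, rfl⟩
  · exact ⟨.tru, trivial, rfl⟩
  · exact ⟨φ, PForm.IsHornClause.isHornCNF ⟨hφ, hφk.trans hk⟩, rfl⟩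

namespace HornDefinable

variable {𝓜 𝓝 : Set (Set α)}

theorem sInfClosed (h𝓜 : HornDefinable 𝓜) : SInfClosed 𝓜 := by
  obtain ⟨φ, hφ, rfl⟩ := h𝓜
  exact hφ.sInfClosed_models

theorem univ : HornDefinable (Set.univ : Set (Set α)) := ⟨.tru, trivial, rfl⟩

theorem empty : HornDefinable (∅ : Set (Set α)) :=
  (ClauseDefinable.empty 0).hornDefinable zero_le_one

theorem inter (h𝓜 : HornDefinable 𝓜) (h𝓝 : HornDefinable 𝓝) : HornDefinable (𝓜 ∩ 𝓝) := by
  obtain ⟨φ, hφ, rfl⟩ := h𝓜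
  obtain ⟨ψ, hψ, rfl⟩ := h𝓝
  exact ⟨.conj φ ψ, ⟨hφ, hψ⟩, rfl⟩

theorem biInter_list {ι : Type*} {𝓕 : ι → Set (Set α)} {l : List ι}
    (h𝓕 : ∀ i ∈ l, HornDefinable (𝓕 i)) : HornDefinable (⋂ i ∈ l, 𝓕 i) := by
  induction l with
  | nil => simpa using univ
  | cons i l ih =>
    rw [List.forall_mem_cons] at h𝓕
    simpa [Set.iInter_or, Set.iInter_inter_distrib] using h𝓕.1.inter (ih h𝓕.2)

theorem preimage_ite (h𝓜 : HornDefinable 𝓜) (A K : Set α) :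
    HornDefinable (A.ite K ⁻¹' 𝓜) := by
  obtain ⟨φ, hφ, rfl⟩ := h𝓜
  induction hφ using PForm.IsHornCNF.induction with
  | tru => exact univ
  | conj φ ψ _ _ ihφ ihψ => exact ihφ.inter ihψ
  | clause φ hφ => exact (hφ.1.clauseDefinable_preimage_ite A K).hornDefinable hφ.2

end HornDefinable

section Circumscription

variable {P Ab K M N : Set α} {𝓜 : Set (Set α)}

theorem ltPZ_compl_iff_ssubset : ltPZ P Pᶜ N M ↔ N ∩ P ⊂ M ∩ P := by
  simp only [ltPZ, lePZ, Set.union_compl_self, Set.compl_univ, Set.inter_empty, and_true]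
  rfl

theorem forall_not_ltPZ_compl_iff_of_isLeast (hK : IsLeast 𝓜 K) (hM : M ∈ 𝓜) :
    (∀ N ∈ 𝓜, ¬ ltPZ P Pᶜ N M) ↔ M ∩ P = K ∩ P := by
  simp only [ltPZ_compl_iff_ssubset]
  have inter_subset_of_mem {N : Set α} (hN : N ∈ 𝓜) : K ∩ P ⊆ N ∩ P :=
    Set.inter_subset_inter_left P (hK.2 hN)
  constructor
  · intro hmin
    exact ((inter_subset_of_mem hM).eq_of_not_ssubset (hmin K hK.1)).symm
  · intro hMK N hN hNM
    exact hNM.not_subset (hMK ▸ inter_subset_of_mem hN)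

/-- The interpretations that agree outside `Ab` with some `(Ab;C)`-minimal member of `𝓜`: the
semantics of a block with described atoms `C` whose members have `𝓜` as set of common models. -/
def circumscription (Ab C : Set α) (𝓜 : Set (Set α)) : Set (Set α) :=
  {M | ∃ Ms : Set α, Ms ∩ Abᶜ = M ∩ Abᶜ ∧ Ms ∈ 𝓜 ∧ ∀ N ∈ 𝓜, ¬ ltPZ Ab C N Ms}

theorem circumscription_empty (Ab C : Set α) : circumscription Ab C ∅ = ∅ := by
  simp [circumscription]

theorem circumscription_compl_of_isLeast (hK : IsLeast 𝓜 K) :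
    circumscription Ab Abᶜ 𝓜 = Ab.ite K ⁻¹' 𝓜 := by
  ext M
  constructor
  · rintro ⟨Ms, hagree, hMs, hmin⟩
    have hMsK : Ms ∩ Ab = K ∩ Ab := (forall_not_ltPZ_compl_iff_of_isLeast hK hMs).mp hmin
    have hMs_eq : Ab.ite K M = Ms := by
      rw [Set.ite, Set.sdiff_eq, ← hMsK, ← hagree, Set.inter_union_compl]
    rwa [Set.mem_preimage, hMs_eq]
  · intro hM
    exact ⟨Ab.ite K M, Set.ite_inter_compl_self .., hM,
      (forall_not_ltPZ_compl_iff_of_isLeast hK hM).mpr (Set.ite_inter_self ..)⟩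

theorem HornDefinable.circumscription_compl (h𝓜 : HornDefinable 𝓜) (Ab : Set α) :
    HornDefinable (circumscription Ab Abᶜ 𝓜) := by
  rcases 𝓜.eq_empty_or_nonempty with rfl | hne
  · rw [circumscription_empty]
    exact .empty
  · rw [circumscription_compl_of_isLeast (h𝓜.sInfClosed.isLeast_sInf hne)]
    exact h𝓜.preimage_ite ..

end Circumscription

section Theories

variable {Ab : Set α}

/-- The set of models of a block. -/
def Block.models (Ab : Set α) (B : Block α) : Set (Set α) := {M | B.sat Ab M}

theorem Block.models_mk (C : Set α) (fs : List (PForm α)) (bs : List (Block α)) :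
    (Block.mk C fs bs).models Ab =
      circumscription Ab C ((⋂ f ∈ fs, f.models) ∩ ⋂ b ∈ bs, b.models Ab) := by
  ext M
  simp [Block.models, PForm.models, circumscription, Block.sat]

theorem Block.IsHorn.hornDefinable_models {B : Block α} (hHorn : B.IsHorn)
    (hNoFixed : B.NoFixed Ab) : HornDefinable (B.models Ab) := by
  induction hHorn with
  | mk hfs _ ih =>
    obtain ⟨rfl, hbs⟩ := hNoFixed
    rw [Block.models_mk]
    have hformulas := HornDefinable.biInter_list fun f hf => ⟨f, hfs f hf, rfl⟩
    have hblocks := HornDefinable.biInter_list fun b hb => ih b hb (hbs b hb)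
    exact (hformulas.inter hblocks).circumscription_compl Ab

theorem hornDefinable_setOf_sat {T : NAT α} (hHorn : ∀ B ∈ T, B.IsHorn)
    (hNoFixed : ∀ B ∈ T, B.NoFixed Ab) : HornDefinable {M | NAT.sat Ab T M} := by
  have hmodels : {M | NAT.sat Ab T M} = ⋂ B ∈ T, B.models Ab := by
    ext M
    simp [NAT.sat, Block.models]
  rw [hmodels]
  exact .biInter_list fun B hB => (hHorn B hB).hornDefinable_models (hNoFixed B hB)

end Theories

/-- Let `T` be a satisfiable Horn NAT without fixed letters.  Then
(i) `T` has a least model `M(T)`: a (unique minimal) model that is below every model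
of `T` on the letters `At ∖ Ab` (`M(T) ≤_{At∖Ab;∅} M` for every model `M` of `T`);
and (ii) there exists a Horn CNF `φ(T)` logically equivalent to `T`, i.e., with
exactly the same models as `T`. -/
theorem horn_nat_no_fixed_least_model_and_horn_cnf (Ab : Set α) (T : NAT α)
    (hHorn : ∀ B ∈ T, B.IsHorn) (hNoFixed : ∀ B ∈ T, B.NoFixed Ab)
    (hSat : ∃ M : Set α, NAT.sat Ab T M) :
    (∃ Mmin : Set α, NAT.sat Ab T Mmin ∧
        ∀ M : Set α, NAT.sat Ab T M → Mmin ∩ Abᶜ ⊆ M ∩ Abᶜ) ∧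
    (∃ φ : PForm α, φ.IsHornCNF ∧ ∀ M : Set α, φ.sat M ↔ NAT.sat Ab T M) := by
  have hT : HornDefinable {M | NAT.sat Ab T M} := hornDefinable_setOf_sat hHorn hNoFixed
  obtain ⟨Mmin, hMmin, hleast⟩ : ∃ K, IsLeast {M | NAT.sat Ab T M} K :=
    ⟨_, hT.sInfClosed.isLeast_sInf hSat⟩
  obtain ⟨φ, hφ, hmodels⟩ := hT
  exact ⟨⟨Mmin, hMmin, fun M hM => Set.inter_subset_inter_left _ (hleast hM)⟩,
    φ, hφ, fun M => Set.ext_iff.mp hmodels M⟩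

end NestedCirc
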